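/- Let E/k be a Galois field extension of degree 4 with Gal(E/k) ≅ ℤ/2ℤ × ℤ/2ℤ and let K be an intermediate field with [K:k] = 2. Then for every β ∈ Kˣ there exists a finite separable field extension F/k such that (i) the image β ⊗ 1 of β in (K ⊗_k F)ˣ is a norm from (E ⊗_k F)ˣ, and (ii) for every finite separable field extension F'/k such that the image of β in (K ⊗_k F')ˣ is a norm from (E ⊗_k F')ˣ, the degree [F:k] divides [F':k]. -/

import Mathlib

open TensorProduct

/-- `β ∈ Kˣ` becomes a norm from `(E ⊗[k] F)ˣ` to `(K ⊗[k] F)ˣ`, where `E ⊗[k] F` is a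
`(K ⊗[k] F)`-algebra via the map induced by the inclusion `K ⊆ E`. -/
def IsNormFrom (k K E F : Type) [Field k] [Field K] [Field E] [Field F]
    [Algebra k K] [Algebra k E] [Algebra K E] [IsScalarTower k K E] [Algebra k F]
    (β : K) : Prop :=
  letI : Algebra (K ⊗[k] F) (E ⊗[k] F) :=
    ((Algebra.TensorProduct.map (IsScalarTower.toAlgHom k K E) (AlgHom.id k F)).toRingHom).toAlgebra
  ∃ x : (E ⊗[k] F)ˣ,
    Algebra.norm (K ⊗[k] F) (x : E ⊗[k] F) = (β : K) ⊗ₜ[k] (1 : F)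

/-!
Choose a subextension `L` of `E / k` of degree `2` complementary to `K`, so that `E = K ⊗[k] L`.
Over `L` every `β` becomes a norm: the étale algebra `L ⊗[k] L` splits off a factor `L`, cut out
by the separability idempotent `e`, and `1 + (β - 1) e` has norm `β`. Conversely, if `β` becomes a
norm of some `x` over a field `F'` of degree `n`, then computing the norm of `x` from `E ⊗[k] F'`
to `K` through `K ⊗[k] F'` and through `E` shows that `β ^ n` is a norm from `E`. Since `β ^ 2` is
always one, an odd `n` forces `β` to be a norm from `E`. Hence `F = k` works if `β` is a norm from
`E`, and `F = L` otherwise.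
-/

section Norm

variable {k R L S : Type*} [CommRing k] [CommRing R] [CommRing L] [CommRing S]
  [Algebra k R] [Algebra k L] [Algebra k S] [Algebra R S] [Algebra L S]
  [IsScalarTower k R S] [IsScalarTower k L S]

theorem isUnit_of_isUnit_norm [Module.Free R S] [Module.Finite R S] {x : S}
    (hx : IsUnit (Algebra.norm R x)) : IsUnit x := by
  rwa [Algebra.norm_apply, ← LinearMap.isUnit_iff_isUnit_det, Algebra.lmul_isUnit_iff] at hx

theorem norm_algebraMap_of_isPushout [Algebra.IsPushout k R L S] [Module.Free k L]
    [Module.Finite k L] (y : L) :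
    Algebra.norm R (algebraMap L S y) = algebraMap k R (Algebra.norm k y) := by
  have h := Algebra.IsPushout.out (R := k) (S := R) (R' := L) (S' := S)
  have hmul : Algebra.lmul R S (algebraMap L S y) = h.endHom (Algebra.lmul k L y) :=
    h.algHom_ext' _ _ <| LinearMap.ext fun z => by
      simpa using (h.endHom_comp_apply (Algebra.lmul k L y) z).symm
  rw [Algebra.norm_apply, hmul, IsBaseChange.det_endHom, Algebra.norm_apply]

-- Multiplication by `e` has rank one, so multiplication by `1 + (r - 1) • e` is a transvection.
theorem norm_one_add_sub_one_smul [Module.Free R S] [Module.Finite R S] {e : S} {μ : S →ₗ[R] R}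
    (hmul : ∀ s, s * e = μ s • e) (he : μ e = 1) (r : R) :
    Algebra.norm R (1 + (r - 1) • e) = r := by
  have htrans : Algebra.lmul R S (1 + (r - 1) • e) = LinearMap.transvection μ ((r - 1) • e) := by
    ext s
    simp only [Algebra.coe_lmul_eq_mul, LinearMap.mul_apply', LinearMap.transvection.apply]
    rw [mul_comm, mul_add, mul_one, mul_smul_comm, hmul, smul_comm]
  rw [Algebra.norm_apply, htrans, LinearMap.transvection.det, map_smul, he, smul_eq_mul, mul_one,
    add_sub_cancel]

-- `S ≅ R ⊗[k] L` has a factor `R` on which `L` acts through `f`; `e` is its idempotent and `μ` the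
-- projection onto it.
theorem exists_mul_eq_smul_of_isPushout [Algebra.IsPushout k R L S]
    [Algebra.FormallyUnramified k L] [Algebra.EssFiniteType k L] (f : L →ₐ[k] R) :
    ∃ (e : S) (μ : S →ₗ[R] R), (∀ s, s * e = μ s • e) ∧ μ e = 1 := by
  have h := Algebra.IsPushout.out (R := k) (S := R) (R' := L) (S' := S)
  let μ : S →ₗ[R] R := h.lift f.toLinearMap
  have hμ (l : L) : μ (algebraMap L S l) = f l := h.lift_eq f.toLinearMap l
  let φ : L ⊗[k] L →ₐ[k] S :=
    Algebra.TensorProduct.productMap ((IsScalarTower.toAlgHom k R S).comp f)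
      (IsScalarTower.toAlgHom k L S)
  have hμφ : μ.restrictScalars k ∘ₗ φ.toLinearMap =
      f.toLinearMap ∘ₗ (Algebra.TensorProduct.lmul' k).toLinearMap := by
    ext a b
    simp [φ, hμ, ← Algebra.smul_def]
  refine ⟨φ (Algebra.FormallyUnramified.elem k L), μ, fun s => ?_, ?_⟩
  · refine LinearMap.congr_fun (f := LinearMap.mulRight R _) (g := μ.smulRight _)
      (h.algHom_ext _ _ fun l => ?_) s
    have := congrArg φ (Algebra.FormallyUnramified.one_tmul_mul_elem (R := k) l)
    simpa [φ, hμ, Algebra.smul_def] using this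
  · have := LinearMap.congr_fun hμφ (Algebra.FormallyUnramified.elem k L)
    simpa [Algebra.FormallyUnramified.lmul_elem] using this

theorem norm_surjective_of_isPushout [Algebra.IsPushout k R L S] [Algebra.FormallyUnramified k L]
    [Module.Free k L] [Module.Finite k L] (f : L →ₐ[k] R) :
    Function.Surjective (Algebra.norm R : S → R) := by
  have h := Algebra.IsPushout.out (R := k) (S := R) (R' := L) (S' := S)
  have : Module.Free R S := h.free
  have : Module.Finite R S := .equiv h.equiv
  obtain ⟨e, μ, hmul, he⟩ := exists_mul_eq_smul_of_isPushout (S := S) f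
  exact fun r => ⟨_, norm_one_add_sub_one_smul hmul he r⟩

theorem exists_norm_eq_of_norm_eq_pow_of_coprime {K E : Type*} [Field K] [Field E]
    [Algebra K E] [FiniteDimensional K E] {β : K} (hβ : β ≠ 0) {n : ℕ}
    (hn : n.Coprime (Module.finrank K E)) {y : E} (hy : Algebra.norm K y = β ^ n) :
    ∃ z : E, Algebra.norm K z = β := by
  refine ⟨y ^ n.gcdA (Module.finrank K E) *
    algebraMap K E β ^ n.gcdB (Module.finrank K E), ?_⟩
  rw [map_mul, Algebra.norm_zpow, Algebra.norm_zpow, hy, Algebra.norm_algebraMap, ← zpow_natCast,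
    ← zpow_natCast, ← zpow_mul, ← zpow_mul, ← zpow_add₀ hβ, ← Nat.gcd_eq_gcd_ab, hn, Nat.cast_one,
    zpow_one]

end Norm

section TensorMap

variable (k K E F : Type*) [CommRing k] [CommRing K] [CommRing E] [CommRing F]
  [Algebra k K] [Algebra k E] [Algebra K E] [IsScalarTower k K E] [Algebra k F]

/-- The `(K ⊗[k] F)`-algebra structure on `E ⊗[k] F` induced by `K → E`: the one with respect to
which `IsNormFrom` takes the norm. -/
noncomputable abbrev tensorMapAlgebra : Algebra (K ⊗[k] F) (E ⊗[k] F) :=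
  (Algebra.TensorProduct.map (IsScalarTower.toAlgHom k K E) (AlgHom.id k F)).toRingHom.toAlgebra

attribute [local instance] tensorMapAlgebra

theorem tensorMapAlgebra_algebraMap_tmul (x : K) (y : F) :
    algebraMap (K ⊗[k] F) (E ⊗[k] F) (x ⊗ₜ y) = algebraMap K E x ⊗ₜ y := by
  simp [RingHom.algebraMap_toAlgebra]

theorem tensorMapAlgebra_isScalarTower : IsScalarTower K (K ⊗[k] F) (E ⊗[k] F) :=
  .of_algebraMap_eq fun x => by
    simp only [Algebra.TensorProduct.algebraMap_apply, tensorMapAlgebra_algebraMap_tmul,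
      Algebra.algebraMap_self, RingHom.id_apply]

attribute [local instance] tensorMapAlgebra_isScalarTower

theorem tensorMapAlgebra_isPushout : Algebra.IsPushout K (K ⊗[k] F) E (E ⊗[k] F) :=
  (Algebra.IsPushout.tensorProduct_tensorProduct k F K E
    (by ext y; simp [tensorMapAlgebra_algebraMap_tmul])).symm

end TensorMap

section IsNormFrom

variable {k K E F : Type} [Field k] [Field K] [Field E] [Field F]
  [Algebra k K] [Algebra k E] [Algebra K E] [IsScalarTower k K E] [Algebra k F] {β : K}

attribute [local instance] tensorMapAlgebra tensorMapAlgebra_isScalarTower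
  tensorMapAlgebra_isPushout

theorem isNormFrom_of_norm_eq_tmul [FiniteDimensional K E] (hβ : β ≠ 0) {x : E ⊗[k] F}
    (hx : Algebra.norm (K ⊗[k] F) x = β ⊗ₜ 1) : IsNormFrom k K E F β := by
  have h := (tensorMapAlgebra_isPushout k K E F).out
  have : Module.Free (K ⊗[k] F) (E ⊗[k] F) := h.free
  have : Module.Finite (K ⊗[k] F) (E ⊗[k] F) := .equiv h.equiv
  have hunit : IsUnit (β ⊗ₜ[k] (1 : F)) :=
    (isUnit_iff_ne_zero.mpr hβ).map (algebraMap K (K ⊗[k] F))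
  exact ⟨(isUnit_of_isUnit_norm (hx ▸ hunit)).unit, hx⟩

theorem isNormFrom_of_norm_eq [FiniteDimensional K E] (hβ : β ≠ 0) {y : E}
    (hy : Algebra.norm K y = β) : IsNormFrom k K E F β := by
  refine isNormFrom_of_norm_eq_tmul hβ (x := algebraMap E (E ⊗[k] F) y) ?_
  rw [norm_algebraMap_of_isPushout (k := K), hy]
  rfl

theorem isNormFrom_of_algHom {L : Type*} [Field L] [Algebra k L] [Algebra L E] [IsScalarTower k L E]
    [Algebra.IsPushout k K L E] [FiniteDimensional k L] [Algebra.IsSeparable k L] (f : L →ₐ[k] F)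
    (hβ : β ≠ 0) : IsNormFrom k K E F β := by
  have : FiniteDimensional K E :=
    .equiv (Algebra.IsPushout.out (R := k) (S := K) (R' := L) (S' := E)).equiv
  have : Algebra.FormallyUnramified k L := .of_isSeparable k L
  have : Algebra.IsPushout k (K ⊗[k] F) L (E ⊗[k] F) :=
    (Algebra.IsPushout.comp_iff k K L E).mpr (tensorMapAlgebra_isPushout k K E F)
  obtain ⟨x, hx⟩ := norm_surjective_of_isPushout (S := E ⊗[k] F)
    (Algebra.TensorProduct.includeRight.comp f) (β ⊗ₜ[k] (1 : F))
  exact isNormFrom_of_norm_eq_tmul hβ hx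

theorem IsNormFrom.exists_norm_eq_pow_finrank (h : IsNormFrom k K E F β) :
    ∃ y : E, Algebra.norm K y = β ^ Module.finrank k F := by
  obtain ⟨x, hx⟩ := h
  have : Module.Free (K ⊗[k] F) (E ⊗[k] F) := (tensorMapAlgebra_isPushout k K E F).out.free
  refine ⟨Algebra.norm E (x : E ⊗[k] F), ?_⟩
  calc Algebra.norm K (Algebra.norm E (x : E ⊗[k] F))
      = Algebra.norm K (Algebra.norm (K ⊗[k] F) (x : E ⊗[k] F)) := by
        rw [Algebra.norm_norm, Algebra.norm_norm]
    _ = Algebra.norm K (algebraMap K (K ⊗[k] F) β) := congrArg _ hx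
    _ = β ^ Module.finrank k F := by rw [Algebra.norm_algebraMap, Module.finrank_baseChange]

end IsNormFrom

section Complement

theorem isPushout_of_finrank_prime {k K L E : Type*} [Field k] [Field K] [CommRing L] [Field E]
    [Algebra k K] [Algebra k L] [Algebra k E] [Algebra K E] [Algebra L E] [IsScalarTower k K E]
    [IsScalarTower k L E] (hp : (Module.finrank K E).Prime)
    (hL : Module.finrank k L = Module.finrank K E)
    {x : L} (hx : algebraMap L E x ∉ (algebraMap K E).range) : Algebra.IsPushout k K L E := by
  have : Module.Finite k L := Module.finite_of_finrank_pos (hL ▸ hp.pos)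
  have : FiniteDimensional K E := .of_finrank_pos hp.pos
  have := Subalgebra.isSimpleOrder_of_finrank_prime K E hp
  let φ : K ⊗[k] L →ₐ[K] E :=
    Algebra.TensorProduct.lift (Algebra.ofId K E) (IsScalarTower.toAlgHom k L E)
      fun _ _ => .all _ _
  have hrange : φ.range = ⊤ := by
    refine (eq_bot_or_eq_top φ.range).resolve_left fun hbot => hx ?_
    have : algebraMap L E x ∈ φ.range := ⟨1 ⊗ₜ x, by simp [φ]⟩
    rwa [hbot] at this
  have hsurj : Function.Surjective φ.toLinearMap := (AlgHom.range_eq_top φ).mp hrange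
  have hinj : Function.Injective φ.toLinearMap :=
    (LinearMap.injective_iff_surjective_of_finrank_eq_finrank
      (by rw [Module.finrank_baseChange, hL])).mpr hsurj
  exact ⟨.of_equiv (.ofBijective φ.toLinearMap ⟨hinj, hsurj⟩) fun y =>
    (by simp [φ] : φ (1 ⊗ₜ y) = algebraMap L E y)⟩

theorem exists_algEquiv_apply_algebraMap_ne {k K E : Type*} [Field k] [Field K] [Field E]
    [Algebra k K] [Algebra k E] [Algebra K E] [IsScalarTower k K E] [IsGalois k E]
    [FiniteDimensional k E] (hK : Module.finrank k K ≠ 1) :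
    ∃ (τ : E ≃ₐ[k] E) (x : K), τ (algebraMap K E x) ≠ algebraMap K E x := by
  by_contra! hfix
  have hbot : (⊥ : Subalgebra k K) = ⊤ := by
    refine eq_top_iff.mpr fun x _ => ?_
    obtain ⟨c, hc⟩ := (IsGalois.mem_range_algebraMap_iff_fixed _).mpr fun τ => hfix τ x
    rw [IsScalarTower.algebraMap_apply k K E] at hc
    exact ⟨c, (algebraMap K E).injective hc⟩
  exact hK (Subalgebra.bot_eq_top_iff_finrank_eq_one.mp hbot)

theorem exists_isPushout_of_exponent_dvd {k K E : Type*} [Field k] [Field K] [Field E]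
    [Algebra k K] [Algebra k E] [Algebra K E] [IsScalarTower k K E] [IsGalois k E]
    {p : ℕ} (hp : p.Prime) (hE : Module.finrank k E = p ^ 2) (hK : Module.finrank k K = p)
    (hexp : Monoid.exponent (E ≃ₐ[k] E) ∣ p) :
    ∃ L : IntermediateField k E, Module.finrank k L = p ∧ Algebra.IsPushout k K L E := by
  have : FiniteDimensional k E := .of_finrank_pos (hE ▸ pow_pos hp.pos 2)
  have : Fact p.Prime := ⟨hp⟩
  obtain ⟨τ, x, hτ⟩ := exists_algEquiv_apply_algebraMap_ne (E := E) (hK ▸ hp.ne_one)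
  let L := IntermediateField.fixedField (Subgroup.zpowers τ)
  have hord : orderOf τ = p := orderOf_eq_prime
    (Monoid.exponent_dvd_iff_forall_pow_eq_one.mp hexp τ) (by rintro rfl; exact hτ rfl)
  have hLE : Module.finrank L E = p := by
    rw [IntermediateField.finrank_fixedField_eq_card, Nat.card_zpowers, hord]
  have hkL : Module.finrank k L = p := by
    have := Module.finrank_mul_finrank k L E
    rw [hLE, hE, sq] at this
    exact Nat.eq_of_mul_eq_mul_right hp.pos this
  have hxL : algebraMap K E x ∉ (algebraMap L E).range := by
    rintro ⟨l, hl⟩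
    exact hτ ((IntermediateField.mem_fixedField_iff _ _).mp (hl ▸ l.2) τ (Subgroup.mem_zpowers τ))
  exact ⟨L, hkL, (isPushout_of_finrank_prime (hLE ▸ hp) (hK.trans hLE.symm) hxL).symm⟩

end Complement

theorem stmt7_general (k K L E : Type) [Field k] [Field K] [Field L] [Field E]
    [Algebra k K] [Algebra k L] [Algebra k E] [Algebra K E] [Algebra L E]
    [IsScalarTower k K E] [IsScalarTower k L E] [Algebra.IsPushout k K L E]
    [Algebra.IsSeparable k L] (hL : (Module.finrank k L).Prime) (β : Kˣ) :
    ∃ (F : Type) (_ : Field F) (_ : Algebra k F),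
      FiniteDimensional k F ∧ Algebra.IsSeparable k F ∧
      IsNormFrom k K E F (β : K) ∧
      ∀ (F' : Type) (_ : Field F') (_ : Algebra k F'),
        FiniteDimensional k F' → IsNormFrom k K E F' (β : K) →
        Module.finrank k F ∣ Module.finrank k F' := by
  have : FiniteDimensional k L := .of_finrank_pos hL.pos
  have hKE := (Algebra.IsPushout.out (R := k) (S := K) (R' := L) (S' := E)).equiv
  have : FiniteDimensional K E := .equiv hKE
  by_cases hβ : ∃ y : E, Algebra.norm K y = β
  · obtain ⟨y, hy⟩ := hβ
    refine ⟨k, inferInstance, inferInstance, inferInstance, inferInstance,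
      isNormFrom_of_norm_eq β.ne_zero hy, fun F' _ _ _ _ => ?_⟩
    rw [Module.finrank_self]
    exact one_dvd _
  · refine ⟨L, inferInstance, inferInstance, inferInstance, inferInstance,
      isNormFrom_of_algHom (AlgHom.id k L) β.ne_zero, fun F' _ _ _ hF' => ?_⟩
    obtain ⟨y, hy⟩ := hF'.exists_norm_eq_pow_finrank
    by_contra hdvd
    refine hβ (exists_norm_eq_of_norm_eq_pow_of_coprime β.ne_zero ?_ hy)
    rw [← hKE.finrank_eq, Module.finrank_baseChange]
    exact ((Nat.Prime.coprime_iff_not_dvd hL).mpr hdvd).symm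

theorem stmt7 (k K E : Type) [Field k] [Field K] [Field E]
    [Algebra k K] [Algebra k E] [Algebra K E] [IsScalarTower k K E]
    [IsGalois k E] (hdeg : Module.finrank k E = 4)
    (hgal : Nonempty ((E ≃ₐ[k] E) ≃* Multiplicative (ZMod 2 × ZMod 2)))
    (hK : Module.finrank k K = 2)
    (β : Kˣ) :
    ∃ (F : Type) (_ : Field F) (_ : Algebra k F),
      FiniteDimensional k F ∧ Algebra.IsSeparable k F ∧
      IsNormFrom k K E F (β : K) ∧
      ∀ (F' : Type) (_ : Field F') (_ : Algebra k F'),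
        FiniteDimensional k F' → Algebra.IsSeparable k F' →
        IsNormFrom k K E F' (β : K) →
        Module.finrank k F ∣ Module.finrank k F' := by
  obtain ⟨L, hL, _⟩ := exists_isPushout_of_exponent_dvd (K := K) Nat.prime_two hdeg hK
    ((Monoid.exponent_eq_of_mulEquiv hgal.some).trans IsKleinFour.exponent_two).dvd
  obtain ⟨F, _, _, hfin, hsep, hnorm, hmin⟩ := stmt7_general k K L E (hL ▸ Nat.prime_two) β
  exact ⟨F, _, _, hfin, hsep, hnorm, fun F' _ _ hfin' _ => hmin F' _ _ hfin'⟩
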